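/- Let (X, σ) be a left non-degenerate braided set, M a right module and N a left module over (X, σ). For ȳ = (y₁,…,y_k) ∈ X^k and 1 ≤ i ≤ k, let χ_i(ȳ) ∈ X denote the first component of J^{−1}( ((y_i ◃ y_{i−1}) ◃ ⋯ ) ◃ y₁, y₁, …, y_{i−1}, y_{i+1}, …, y_k ), where J is the (bijective) k-guitar map and the fold over the empty list for i = 1 is y₁ itself (so χ₁(ȳ) is the first component of J^{−1}(ȳ)). On C_k := M × X^k × N define d_i(m, ȳ, ν) := (m, y_i⊛y₁, …, y_i⊛y_{i−1}, y_i·y_{i+1}, …, y_i·y_k, y_i∙ν) and d'_i(m, ȳ, ν) := (m∙χ_i(ȳ), y₁, …, y_{i−1}, y_{i+1}, …, y_k, ν). Then: (1) the families (d'_i, d_i) form a pre-cubical structure in Set, i.e., d_i^ε ∘ d_j^ζ = d_{j−1}^ζ ∘ d_i^ε for i < j with d^ε, d^ζ taken independently from {d, d'}; (2) the extended guitar map Ĵ := id_M × J × id_N satisfies Ĵ ∘ d_i^{r,−} = d_i ∘ Ĵ and Ĵ ∘ d_i^{l,+} = d'_i ∘ Ĵ, where d_i^{l,+} := ρ_0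 ∘ σ_1 ∘ ⋯ ∘ σ_{i−1} and d_i^{r,−} := λ_k ∘ σ_{k−1} ∘ ⋯ ∘ σ_i. -/

import Mathlib

/-- `σ` applied at positions 1,2 of `X × X × X`. -/
def s12 {X : Type*} (σ : X × X → X × X) : X × X × X → X × X × X :=
  fun p => ((σ (p.1, p.2.1)).1, (σ (p.1, p.2.1)).2, p.2.2)

/-- `σ` applied at positions 2,3 of `X × X × X`. -/
def s23 {X : Type*} (σ : X × X → X × X) : X × X × X → X × X × X :=
  fun p => (p.1, σ p.2)

/-- Apply `σ` at (1-based) positions `i, i+1` of a list. -/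
def applyAt {X : Type*} (σ : X × X → X × X) : ℕ → List X → List X
  | 1, a :: b :: t => (σ (a, b)).1 :: (σ (a, b)).2 :: t
  | n + 2, a :: t => a :: applyAt σ (n + 1) t
  | _, l => l

/-- `σ_1 ∘ σ_2 ∘ ⋯ ∘ σ_j` (with `σ_j` applied first). -/
def chainLow {X : Type*} (σ : X × X → X × X) : ℕ → List X → List X
  | 0, l => l
  | j + 1, l => chainLow σ j (applyAt σ (j + 1) l)

/-- `σ_{i+c-1} ∘ ⋯ ∘ σ_{i+1} ∘ σ_i` (with `σ_i` applied first). -/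
def chainHigh {X : Type*} (σ : X × X → X × X) : ℕ → ℕ → List X → List X
  | _, 0, l => l
  | i, c + 1, l => chainHigh σ (i + 1) c (applyAt σ i l)

/-- `ρ_0`: act with the first `X`-entry on the `M`-component. -/
def rho0 {X M N : Type*} (actM : M → X → M) :
    M × List X × N → M × List X × N
  | (m, x :: t, ν) => (actM m x, t, ν)
  | p => p

/-- `λ_n`: act with the last `X`-entry on the `N`-component. -/
def lamN {X M N : Type*} (actN : X → N → N) :
    M × List X × N → M × List X × N :=
  fun p =>
    match p.2.1.getLast? with
    | some a => (p.1, p.2.1.dropLast, actN a p.2.2)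
    | none => p

/-- The braided boundary `d_i^{l,+} = ρ_0 ∘ σ_1 ∘ ⋯ ∘ σ_{i-1}`. -/
def dLP {X M N : Type*} (σ : X × X → X × X) (actM : M → X → M) (i : ℕ) :
    M × List X × N → M × List X × N :=
  fun p => rho0 actM (p.1, chainLow σ (i - 1) p.2.1, p.2.2)

/-- The braided boundary `d_i^{r,-} = λ_k ∘ σ_{k-1} ∘ ⋯ ∘ σ_i`. -/
def dRM {X M N : Type*} (σ : X × X → X × X) (actN : X → N → N) (n i : ℕ) :
    M × List X × N → M × List X × N :=
  fun p => lamN actN (p.1, chainHigh σ i (n - i) p.2.1, p.2.2)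

/-- The guitar map `J`, with components `J_i = r(…r(r(x_i,x_{i+1}),x_{i+2})…,x_n)`. -/
def guitar {X : Type*} (σ : X × X → X × X) : List X → List X
  | [] => []
  | x :: t => (t.foldl (fun a b => (σ (a, b)).2) x) :: guitar σ t

/-- The map `χ_i(ȳ)`: the first component of
`J⁻¹(((y_i ◃ y_{i-1}) ◃ ⋯) ◃ y₁, y₁, …, y_{i-1}, y_{i+1}, …, y_k)`. -/
def chiL {X : Type*} (tri : X → X → X) (Jinv : List X → List X)
    (i : ℕ) (ys : List X) : Option X :=
  match ys[i - 1]? with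
  | some x =>
      (Jinv ((((ys.take (i - 1)).reverse).foldl tri x)
        :: (ys.take (i - 1) ++ ys.drop i))).head?
  | none => none

/-- The boundary
`d_i(m, ȳ, ν) = (m, y_i⊛y₁,…,y_i⊛y_{i-1}, y_i·y_{i+1},…,y_i·y_k, y_i∙ν)`. -/
def dCyc {X M N : Type*} (star dot : X → X → X) (actN : X → N → N) (i : ℕ) :
    M × List X × N → M × List X × N :=
  fun p =>
    match p.2.1[i - 1]? with
    | some x =>
        (p.1, ((p.2.1.take (i - 1)).map (fun a => star x a))
          ++ ((p.2.1.drop i).map (fun a => dot x a)), actN x p.2.2)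
    | none => p

/-- The boundary `d'_i(m, ȳ, ν) = (m∙χ_i(ȳ), y₁,…,y_{i-1},y_{i+1},…,y_k, ν)`. -/
def dPrime {X M N : Type*} (tri : X → X → X) (Jinv : List X → List X)
    (actM : M → X → M) (i : ℕ) : M × List X × N → M × List X × N :=
  fun p =>
    match chiL tri Jinv i p.2.1 with
    | some c => (actM p.1 c, p.2.1.eraseIdx (i - 1), p.2.2)
    | none => p

/-!
Write `σ = (l, r)`. Iterating `σ` lets a letter cross a whole word, to the right or to the left, and
`d_i^{r,-}` and `d_i^{l,+}` move the `i`-th letter across everything on its right, respectively on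
its left, before letting it act on `N`, respectively on `M`. Thus the pre-cubical identities for
these faces are three-strand braid relations in which one strand has been replaced by a word,
together with the module axioms.

The `i`-th entry of `J` is the `i`-th letter after it has crossed all letters on its right. For
`y = r(a, b)` the operations are `b ⊛ y = a`, `y · b = l(a, b)` and `b ◃ y = r(l(a, b), y)`, and by
the braid relations these three formulas persist after a further word has been crossed. Hence `J`
carries the faces `d_i^{r,-}`, `d_i^{l,+}` to `d_i`, `d'_i`. As `J` is bijective, the pre-cubical
identities follow by transport.
-/

section GradedFaces

variable {C D : Type*}

/-- One of the pre-cubical identities, `d_i ∘ e_j = e_{j-1} ∘ d_i` for `1 ≤ i < j ≤ k` on elements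
of degree `k`. The degree is a function, so that all the sets `C_k` are gathered in one type. -/
def FacesCommute (deg : C → ℕ) (d e : ℕ → C → C) : Prop :=
  ∀ ⦃i j : ℕ⦄ ⦃p : C⦄, 1 ≤ i → i < j → j ≤ deg p → d i (e j p) = e (j - 1) (d i p)

/-- The faces `d_i`, `1 ≤ i ≤ k`, send degree `k` to degree `k - 1`. -/
def LowersDegree (deg : C → ℕ) (d : ℕ → C → C) : Prop :=
  ∀ ⦃i : ℕ⦄ ⦃p : C⦄, 1 ≤ i → i ≤ deg p → deg (d i p) + 1 = deg p

/-- The map `J` carries the faces `d_i`, `1 ≤ i ≤ k`, to the faces `d'_i` in each degree `k`. -/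
def IntertwinesFaces (deg : C → ℕ) (J : C → D) (d : ℕ → C → C) (d' : ℕ → D → D) : Prop :=
  ∀ ⦃i : ℕ⦄ ⦃p : C⦄, 1 ≤ i → i ≤ deg p → J (d i p) = d' i (J p)

theorem FacesCommute.transport {deg : C → ℕ} {deg' : D → ℕ} {J : C → D} {d e : ℕ → C → C}
    {d' e' : ℕ → D → D} (hde : FacesCommute deg d e) (hJ : Function.Surjective J)
    (hdeg : ∀ p, deg' (J p) = deg p) (hd : LowersDegree deg d) (he : LowersDegree deg e)
    (hJd : IntertwinesFaces deg J d d') (hJe : IntertwinesFaces deg J e e') :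
    FacesCommute deg' d' e' := by
  intro i j q hi hij hj
  obtain ⟨p, rfl⟩ := hJ q
  rw [hdeg] at hj
  have hdeg_d : deg (d i p) + 1 = deg p := hd hi (by omega)
  have hdeg_e : deg (e j p) + 1 = deg p := he (by omega) hj
  calc d' i (e' j (J p)) = J (d i (e j p)) := by
        rw [← hJe (by omega) hj, ← hJd hi (by omega)]
    _ = J (e (j - 1) (d i p)) := by rw [hde hi hij hj]
    _ = e' (j - 1) (d' i (J p)) := by
        rw [hJe (by omega) (by omega), hJd hi (by omega)]

end GradedFaces

section Split

variable {X : Type*}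

theorem exists_split (w : List X) {i : ℕ} (hi : 1 ≤ i) (hiw : i ≤ w.length) :
    ∃ s x t, w = s ++ x :: t ∧ i = s.length + 1 := by
  obtain ⟨n, rfl⟩ := Nat.exists_eq_add_of_le' hi
  refine ⟨w.take n, w[n], w.drop (n + 1), by simp, ?_⟩
  rw [List.length_take]
  omega

theorem exists_split_split (w : List X) {i j : ℕ} (hi : 1 ≤ i) (hij : i < j) (hjw : j ≤ w.length) :
    ∃ s x t y u, w = s ++ x :: (t ++ y :: u) ∧ w = s ++ x :: t ++ y :: u ∧
      i = s.length + 1 ∧ j = s.length + t.length + 2 := by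
  obtain ⟨v, y, u, rfl, rfl⟩ := exists_split w (by omega) hjw
  obtain ⟨s, x, t, rfl, rfl⟩ := exists_split v hi (by omega)
  exact ⟨s, x, t, y, u, List.append_assoc _ _ _, rfl, rfl, by simp; omega⟩

end Split

section Crossing

variable {X : Type*} (σ : X × X → X × X)

/-- The component `l` of `σ = (l, r)`. -/
def braidL (a b : X) : X := (σ (a, b)).1

/-- The component `r` of `σ = (l, r)`. -/
def braidR (a b : X) : X := (σ (a, b)).2

/-- The letter obtained from `x` when it crosses the word `t` to the right. -/
def crossRight (x : X) (t : List X) : X := t.foldl (braidR σ) x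

/-- The word obtained from `t` when the letter `x` crosses it to the right. -/
def crossRightWord : X → List X → List X
  | _, [] => []
  | x, y :: t => braidL σ x y :: crossRightWord (braidR σ x y) t

/-- The letter obtained from `x` when it crosses the word `s` to the left. -/
def crossLeft (s : List X) (x : X) : X := s.foldr (braidL σ) x

/-- The word obtained from `s` when the letter `x` crosses it to the left. -/
def crossLeftWord : List X → X → List X
  | [], _ => []
  | a :: s, x => braidR σ a (crossLeft σ s x) :: crossLeftWord s x

theorem crossRight_cons (x y : X) (t : List X) :
    crossRight σ x (y :: t) = crossRight σ (braidR σ x y) t :=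
  rfl

theorem crossRight_append (x : X) (s t : List X) :
    crossRight σ x (s ++ t) = crossRight σ (crossRight σ x s) t :=
  List.foldl_append

theorem crossLeft_cons (a : X) (s : List X) (x : X) :
    crossLeft σ (a :: s) x = braidL σ a (crossLeft σ s x) :=
  rfl

theorem crossLeft_append (s t : List X) (x : X) :
    crossLeft σ (s ++ t) x = crossLeft σ s (crossLeft σ t x) :=
  List.foldr_append

theorem crossRightWord_append (x : X) (s t : List X) :
    crossRightWord σ x (s ++ t) =
      crossRightWord σ x s ++ crossRightWord σ (crossRight σ x s) t := by
  induction s generalizing x with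
  | nil => rfl
  | cons a s ih => simp only [List.cons_append, crossRightWord, crossRight_cons, ih]

theorem crossLeftWord_append (s t : List X) (x : X) :
    crossLeftWord σ (s ++ t) x =
      crossLeftWord σ s (crossLeft σ t x) ++ crossLeftWord σ t x := by
  induction s with
  | nil => rfl
  | cons a s ih => simp only [List.cons_append, crossLeftWord, crossLeft_append, ih]

theorem crossRightWord_append_cons (x y : X) (t u : List X) :
    crossRightWord σ x (t ++ y :: u) =
      crossRightWord σ x t ++ braidL σ (crossRight σ x t) y ::
        crossRightWord σ (braidR σ (crossRight σ x t) y) u := by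
  rw [crossRightWord_append, crossRightWord]

theorem crossLeftWord_append_cons (s t : List X) (x y : X) :
    crossLeftWord σ (s ++ x :: t) y =
      crossLeftWord σ s (braidL σ x (crossLeft σ t y)) ++
        braidR σ x (crossLeft σ t y) :: crossLeftWord σ t y := by
  rw [crossLeftWord_append, crossLeft_cons, crossLeftWord]

theorem length_crossRightWord (x : X) (t : List X) :
    (crossRightWord σ x t).length = t.length := by
  induction t generalizing x with
  | nil => rfl
  | cons y t ih => simp only [crossRightWord, List.length_cons, ih]

theorem length_crossLeftWord (s : List X) (x : X) :
    (crossLeftWord σ s x).length = s.length := by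
  induction s with
  | nil => rfl
  | cons a s ih => simp only [crossLeftWord, List.length_cons, ih]

theorem applyAt_append_cons_cons (s t : List X) (a b : X) :
    applyAt σ (s.length + 1) (s ++ a :: b :: t) = s ++ braidL σ a b :: braidR σ a b :: t := by
  induction s with
  | nil => rfl
  | cons c s ih => exact congrArg (c :: ·) ih

theorem chainLow_append_cons (s t : List X) (x : X) :
    chainLow σ s.length (s ++ x :: t) = crossLeft σ s x :: (crossLeftWord σ s x ++ t) := by
  induction s using List.reverseRecOn generalizing x t with
  | nil => rfl
  | append_singleton s a ih =>
    rw [List.length_append, List.length_singleton, chainLow, List.append_assoc,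
      List.singleton_append, applyAt_append_cons_cons, ih, crossLeft_append, crossLeftWord_append,
      List.append_assoc]
    rfl

theorem chainHigh_append_cons (s t : List X) (x : X) :
    chainHigh σ (s.length + 1) t.length (s ++ x :: t) =
      s ++ crossRightWord σ x t ++ [crossRight σ x t] := by
  induction t generalizing x s with
  | nil => simp [chainHigh, crossRightWord, crossRight]
  | cons y t ih =>
    rw [List.length_cons, chainHigh, applyAt_append_cons_cons]
    simpa [crossRightWord, crossRight_cons] using ih (s ++ [braidL σ x y]) (braidR σ x y)

end Crossing

section BraidRelations

variable {X : Type*} {σ : X × X → X × X}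

/-- The Yang–Baxter equation, making `(X, σ)` a braided set. -/
def IsBraided (σ : X × X → X × X) : Prop :=
  s12 σ ∘ s23 σ ∘ s12 σ = s23 σ ∘ s12 σ ∘ s23 σ

namespace IsBraided

theorem braidL_braidL (hσ : IsBraided σ) (a b c : X) :
    braidL σ (braidL σ a b) (braidL σ (braidR σ a b) c) = braidL σ a (braidL σ b c) :=
  congrArg (fun p => p.1) (congrFun hσ (a, b, c))

theorem braidR_braidL (hσ : IsBraided σ) (a b c : X) :
    braidR σ (braidL σ a b) (braidL σ (braidR σ a b) c) =
      braidL σ (braidR σ a (braidL σ b c)) (braidR σ b c) :=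
  congrArg (fun p => p.2.1) (congrFun hσ (a, b, c))

theorem braidR_braidR (hσ : IsBraided σ) (a b c : X) :
    braidR σ (braidR σ a b) c = braidR σ (braidR σ a (braidL σ b c)) (braidR σ b c) :=
  congrArg (fun p => p.2.2) (congrFun hσ (a, b, c))

theorem yangBaxter_word_letter_letter (hσ : IsBraided σ) (s : List X) (x z : X) :
    crossLeft σ s (braidL σ x z) =
        braidL σ (crossLeft σ s x) (crossLeft σ (crossLeftWord σ s x) z) ∧
      crossLeft σ (crossLeftWord σ s (braidL σ x z)) (braidR σ x z) =
        braidR σ (crossLeft σ s x) (crossLeft σ (crossLeftWord σ s x) z) ∧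
      crossLeftWord σ (crossLeftWord σ s (braidL σ x z)) (braidR σ x z) =
        crossLeftWord σ (crossLeftWord σ s x) z := by
  induction s with
  | nil => exact ⟨rfl, rfl, rfl⟩
  | cons a s ih =>
    obtain ⟨hfst, hsnd, hword⟩ := ih
    simp only [crossLeftWord, crossLeft_cons, hfst, hsnd, hword]
    exact ⟨(hσ.braidL_braidL _ _ _).symm, (hσ.braidR_braidL _ _ _).symm,
      by rw [← hσ.braidR_braidR]⟩

theorem yangBaxter_letter_word_letter (hσ : IsBraided σ) (x : X) (t : List X) (y : X) :
    braidL σ x (crossLeft σ t y) =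
        crossLeft σ (crossRightWord σ x t) (braidL σ (crossRight σ x t) y) ∧
      crossRightWord σ (braidR σ x (crossLeft σ t y)) (crossLeftWord σ t y) =
        crossLeftWord σ (crossRightWord σ x t) (braidL σ (crossRight σ x t) y) ∧
      crossRight σ (braidR σ x (crossLeft σ t y)) (crossLeftWord σ t y) =
        braidR σ (crossRight σ x t) y := by
  induction t generalizing x with
  | nil => exact ⟨rfl, rfl, rfl⟩
  | cons a t ih =>
    obtain ⟨hfst, hword, hsnd⟩ := ih (braidR σ x a)
    simp only [crossLeftWord, crossRightWord, crossLeft_cons, crossRight_cons]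
    rw [← hfst, ← hword, ← hsnd, hσ.braidL_braidL, hσ.braidR_braidL, ← hσ.braidR_braidR]
    exact ⟨rfl, rfl, rfl⟩

theorem yangBaxter_letter_letter_word (hσ : IsBraided σ) (z y : X) (u : List X) :
    crossRightWord σ (braidL σ z y) (crossRightWord σ (braidR σ z y) u) =
        crossRightWord σ z (crossRightWord σ y u) ∧
      crossRight σ (braidL σ z y) (crossRightWord σ (braidR σ z y) u) =
        braidL σ (crossRight σ z (crossRightWord σ y u)) (crossRight σ y u) ∧
      crossRight σ (braidR σ z y) u =
        braidR σ (crossRight σ z (crossRightWord σ y u)) (crossRight σ y u) := by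
  induction u generalizing z y with
  | nil => exact ⟨rfl, rfl, rfl⟩
  | cons a u ih =>
    obtain ⟨hword, hfst, hsnd⟩ := ih (braidR σ z (braidL σ y a)) (braidR σ y a)
    simp only [crossRightWord, crossRight_cons]
    rw [hσ.braidL_braidL, hσ.braidR_braidL, hσ.braidR_braidR, hword, hfst, hsnd]
    exact ⟨rfl, rfl, rfl⟩

end IsBraided

end BraidRelations

section BraidedFaces

variable {X M N : Type*} {σ : X × X → X × X} {actM : M → X → M} {actN : X → N → N}

/-- The degree `k` of an element of `M × X^k × N`. -/
def wordLength (p : M × List X × N) : ℕ := p.2.1.length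

/-- The face `d_i^{r,-}`, with the degree `k` read off from the argument. -/
def dRMSelf (σ : X × X → X × X) (actN : X → N → N) (i : ℕ) (p : M × List X × N) :
    M × List X × N :=
  dRM σ actN (wordLength p) i p

theorem dLP_of_split {w s t : List X} {x : X} {i : ℕ} (hw : w = s ++ x :: t)
    (hi : i = s.length + 1) (m : M) (ν : N) :
    dLP σ actM i (m, w, ν) = (actM m (crossLeft σ s x), crossLeftWord σ s x ++ t, ν) := by
  rw [hw, hi, dLP, Nat.add_sub_cancel, chainLow_append_cons, rho0]

theorem dRMSelf_of_split {w s t : List X} {x : X} {i : ℕ} (hw : w = s ++ x :: t)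
    (hi : i = s.length + 1) (m : M) (ν : N) :
    dRMSelf σ actN i (m, w, ν) =
      (m, s ++ crossRightWord σ x t, actN (crossRight σ x t) ν) := by
  have hlength : (s ++ x :: t).length - (s.length + 1) = t.length := by simp; omega
  rw [hw, hi, dRMSelf, wordLength, dRM, hlength, chainHigh_append_cons]
  simp [lamN]

theorem lowersDegree_dLP :
    LowersDegree wordLength (dLP σ actM : ℕ → M × List X × N → M × List X × N) := by
  rintro i ⟨m, w, ν⟩ hi hiw
  obtain ⟨s, x, t, rfl, rfl⟩ := exists_split w hi hiw
  simp only [dLP_of_split rfl rfl, wordLength, List.length_append, List.length_cons,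
    length_crossLeftWord, Nat.add_assoc]

theorem lowersDegree_dRMSelf :
    LowersDegree wordLength (dRMSelf σ actN : ℕ → M × List X × N → M × List X × N) := by
  rintro i ⟨m, w, ν⟩ hi hiw
  obtain ⟨s, x, t, rfl, rfl⟩ := exists_split w hi hiw
  simp only [dRMSelf_of_split rfl rfl, wordLength, List.length_append, List.length_cons,
    length_crossRightWord, Nat.add_assoc]

theorem facesCommute_dLP_dLP (hσ : IsBraided σ)
    (hM : ∀ m a b, actM (actM m a) b = actM (actM m (braidL σ a b)) (braidR σ a b)) :
    FacesCommute wordLength (dLP σ actM : ℕ → M × List X × N → M × List X × N) (dLP σ actM) := by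
  rintro i j ⟨m, w, ν⟩ hi hij hj
  obtain ⟨s, x, t, y, u, hwx, hwy, rfl, rfl⟩ := exists_split_split w hi hij hj
  have hsplit_x : crossLeftWord σ (s ++ x :: t) y ++ u =
      crossLeftWord σ s (braidL σ x (crossLeft σ t y)) ++
        braidR σ x (crossLeft σ t y) :: (crossLeftWord σ t y ++ u) := by
    rw [crossLeftWord_append_cons, List.append_assoc, List.cons_append]
  have hsplit_y : crossLeftWord σ s x ++ (t ++ y :: u) = crossLeftWord σ s x ++ t ++ y :: u :=
    (List.append_assoc _ _ _).symm
  obtain ⟨hfst, hsnd, hword⟩ := hσ.yangBaxter_word_letter_letter s x (crossLeft σ t y)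
  rw [dLP_of_split hwy (by simp; omega), dLP_of_split hsplit_x (by simp [length_crossLeftWord]),
    dLP_of_split hwx rfl, dLP_of_split hsplit_y (by simp [length_crossLeftWord]),
    crossLeft_append, crossLeft_append, crossLeftWord_append, crossLeft_cons, hfst, hsnd, hword,
    List.append_assoc, ← hM]

-- The two letters move apart, so no braid relation is involved.
theorem facesCommute_dLP_dRMSelf :
    FacesCommute wordLength (dLP σ actM : ℕ → M × List X × N → M × List X × N)
      (dRMSelf σ actN) := by
  rintro i j ⟨m, w, ν⟩ hi hij hj
  obtain ⟨s, x, t, y, u, hwx, hwy, rfl, rfl⟩ := exists_split_split w hi hij hj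
  have hsplit_x : s ++ x :: t ++ crossRightWord σ y u = s ++ x :: (t ++ crossRightWord σ y u) :=
    List.append_assoc _ _ _
  have hsplit_y : crossLeftWord σ s x ++ (t ++ y :: u) = crossLeftWord σ s x ++ t ++ y :: u :=
    (List.append_assoc _ _ _).symm
  rw [dRMSelf_of_split hwy (by simp; omega), dLP_of_split hsplit_x rfl, dLP_of_split hwx rfl,
    dRMSelf_of_split hsplit_y (by simp [length_crossLeftWord]), List.append_assoc]

theorem facesCommute_dRMSelf_dLP (hσ : IsBraided σ) :
    FacesCommute wordLength (dRMSelf σ actN : ℕ → M × List X × N → M × List X × N)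
      (dLP σ actM) := by
  rintro i j ⟨m, w, ν⟩ hi hij hj
  obtain ⟨s, x, t, y, u, hwx, hwy, rfl, rfl⟩ := exists_split_split w hi hij hj
  have hsplit_x : crossLeftWord σ (s ++ x :: t) y ++ u =
      crossLeftWord σ s (braidL σ x (crossLeft σ t y)) ++
        braidR σ x (crossLeft σ t y) :: (crossLeftWord σ t y ++ u) := by
    rw [crossLeftWord_append_cons, List.append_assoc, List.cons_append]
  have hsplit_y : s ++ crossRightWord σ x (t ++ y :: u) =
      s ++ crossRightWord σ x t ++ braidL σ (crossRight σ x t) y ::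
        crossRightWord σ (braidR σ (crossRight σ x t) y) u := by
    rw [crossRightWord_append_cons, List.append_assoc]
  obtain ⟨hfst, hword, hsnd⟩ := hσ.yangBaxter_letter_word_letter x t y
  rw [dLP_of_split hwy (by simp; omega),
    dRMSelf_of_split hsplit_x (by simp [length_crossLeftWord]), dRMSelf_of_split hwx rfl,
    dLP_of_split hsplit_y (by simp [length_crossRightWord]), crossLeft_append, crossLeft_append,
    crossLeft_cons, crossLeftWord_append, crossRightWord_append, crossRight_append,
    crossRight_append, crossRight_cons, hword, hsnd, ← hfst, List.append_assoc]

theorem facesCommute_dRMSelf_dRMSelf (hσ : IsBraided σ)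
    (hN : ∀ a b n, actN a (actN b n) = actN (braidL σ a b) (actN (braidR σ a b) n)) :
    FacesCommute wordLength (dRMSelf σ actN : ℕ → M × List X × N → M × List X × N)
      (dRMSelf σ actN) := by
  rintro i j ⟨m, w, ν⟩ hi hij hj
  obtain ⟨s, x, t, y, u, hwx, hwy, rfl, rfl⟩ := exists_split_split w hi hij hj
  have hsplit_x : s ++ x :: t ++ crossRightWord σ y u = s ++ x :: (t ++ crossRightWord σ y u) :=
    List.append_assoc _ _ _
  have hsplit_y : s ++ crossRightWord σ x (t ++ y :: u) =
      s ++ crossRightWord σ x t ++ braidL σ (crossRight σ x t) y ::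
        crossRightWord σ (braidR σ (crossRight σ x t) y) u := by
    rw [crossRightWord_append_cons, List.append_assoc]
  obtain ⟨hword, hfst, hsnd⟩ := hσ.yangBaxter_letter_letter_word (crossRight σ x t) y u
  rw [dRMSelf_of_split hwy (by simp; omega), dRMSelf_of_split hsplit_x rfl,
    dRMSelf_of_split hwx rfl, dRMSelf_of_split hsplit_y (by simp [length_crossRightWord]),
    crossRightWord_append, crossRight_append, crossRight_append, crossRight_cons, hword, hfst,
    hsnd, List.append_assoc, ← hN]

end BraidedFaces

section Guitar

variable {X : Type*} {σ : X × X → X × X} {star dot tri : X → X → X}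

theorem guitar_cons (x : X) (t : List X) :
    guitar σ (x :: t) = crossRight σ x t :: guitar σ t :=
  rfl

theorem length_guitar (w : List X) : (guitar σ w).length = w.length := by
  induction w with
  | nil => rfl
  | cons x t ih => rw [guitar_cons, List.length_cons, List.length_cons, ih]

theorem guitar_append (s t : List X) :
    guitar σ (s ++ t) = (guitar σ s).map (crossRight σ · t) ++ guitar σ t := by
  induction s with
  | nil => rfl
  | cons a s ih => simp [guitar_cons, ih, crossRight_append]

theorem guitar_append_cons (s t : List X) (x : X) :
    guitar σ (s ++ x :: t) =
      (guitar σ s).map (crossRight σ · (x :: t)) ++ crossRight σ x t :: guitar σ t := by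
  rw [guitar_append, guitar_cons]

theorem dot_braidR (hstar : ∀ a b, star b (braidR σ a b) = a)
    (hdot : ∀ a b, dot a b = braidL σ (star b a) b) (a b : X) :
    dot (braidR σ a b) b = braidL σ a b := by
  rw [hdot, hstar]

theorem tri_braidR (hdot : ∀ a b, dot (braidR σ a b) b = braidL σ a b)
    (htri : ∀ a b, tri a b = braidR σ (dot b a) b) (a b : X) :
    tri b (braidR σ a b) = braidR σ (braidL σ a b) (braidR σ a b) := by
  rw [htri, hdot]

theorem IsBraided.star_crossRight (hσ : IsBraided σ)
    (hstar : ∀ a b, star b (braidR σ a b) = a) (a x : X) (t : List X) :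
    star (crossRight σ x t) (crossRight σ a (x :: t)) =
      crossRight σ a (crossRightWord σ x t) := by
  rw [crossRight_cons, (hσ.yangBaxter_letter_letter_word a x t).2.2, hstar]

theorem IsBraided.dot_crossRight (hσ : IsBraided σ)
    (hdot : ∀ a b, dot (braidR σ a b) b = braidL σ a b) (a x : X) (t : List X) :
    dot (crossRight σ a (x :: t)) (crossRight σ x t) =
      crossRight σ (braidL σ a x) (crossRightWord σ (braidR σ a x) t) := by
  obtain ⟨-, hfst, hsnd⟩ := hσ.yangBaxter_letter_letter_word a x t
  rw [crossRight_cons, hsnd, hdot, hfst]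

theorem IsBraided.tri_crossRight (hσ : IsBraided σ)
    (htri : ∀ a b, tri b (braidR σ a b) = braidR σ (braidL σ a b) (braidR σ a b))
    (a x : X) (t : List X) :
    tri (crossRight σ x t) (crossRight σ a (x :: t)) =
      crossRight σ (braidL σ a x) (braidR σ a x :: t) := by
  obtain ⟨-, hfst, hsnd⟩ := hσ.yangBaxter_letter_letter_word a x t
  rw [crossRight_cons, hsnd, htri, ← hfst, ← hsnd, crossRight_cons,
    (hσ.yangBaxter_letter_letter_word (braidL σ a x) (braidR σ a x) t).2.2]

theorem IsBraided.guitar_crossRightWord (hσ : IsBraided σ)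
    (hdot : ∀ a b, dot (braidR σ a b) b = braidL σ a b) (x : X) (t : List X) :
    guitar σ (crossRightWord σ x t) = (guitar σ t).map (dot (crossRight σ x t)) := by
  induction t generalizing x with
  | nil => rfl
  | cons y t ih =>
    rw [crossRightWord, guitar_cons, guitar_cons, List.map_cons, hσ.dot_crossRight hdot, ih,
      crossRight_cons]

theorem IsBraided.crossRight_crossLeftWord_append (hσ : IsBraided σ) (a : X) (s t : List X)
    (x : X) :
    crossRight σ (braidR σ a (crossLeft σ s x)) (crossLeftWord σ s x ++ t) =
      crossRight σ (crossRight σ a s) (x :: t) := by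
  rw [crossRight_append, (hσ.yangBaxter_letter_word_letter a s x).2.2, crossRight_cons]

theorem IsBraided.guitar_crossLeftWord_append (hσ : IsBraided σ) (s t : List X) (x : X) :
    guitar σ (crossLeftWord σ s x ++ t) =
      (guitar σ s).map (crossRight σ · (x :: t)) ++ guitar σ t := by
  induction s with
  | nil => rfl
  | cons a s ih =>
    rw [crossLeftWord, List.cons_append, guitar_cons, ih, hσ.crossRight_crossLeftWord_append]
    rfl

theorem IsBraided.crossRight_crossLeft (hσ : IsBraided σ)
    (htri : ∀ a b, tri b (braidR σ a b) = braidR σ (braidL σ a b) (braidR σ a b))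
    (s t : List X) (x : X) :
    crossRight σ (crossLeft σ s x) (crossLeftWord σ s x ++ t) =
      ((guitar σ s).map (crossRight σ · (x :: t))).reverse.foldl tri (crossRight σ x t) := by
  induction s with
  | nil => rfl
  | cons a s ih =>
    rw [crossLeftWord, crossLeft_cons, List.cons_append, ← hσ.tri_crossRight htri, ih,
      crossRight_cons, hσ.crossRight_crossLeftWord_append, guitar_cons, List.map_cons,
      List.reverse_cons, List.foldl_append]
    rfl

end Guitar

section GuitarIntertwines

variable {X M N : Type*} {σ : X × X → X × X} {star dot tri : X → X → X} {Jinv : List X → List X}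
  {actM : M → X → M} {actN : X → N → N}

/-- The extended guitar map `Ĵ = id_M × J × id_N`. -/
def guitarHat (σ : X × X → X × X) (p : M × List X × N) : M × List X × N :=
  (p.1, guitar σ p.2.1, p.2.2)

theorem wordLength_guitarHat (p : M × List X × N) :
    wordLength (guitarHat σ p) = wordLength p :=
  length_guitar p.2.1

theorem surjective_guitarHat (hJ : Function.Surjective (guitar σ)) :
    Function.Surjective (guitarHat σ : M × List X × N → M × List X × N) := by
  rintro ⟨m, w, ν⟩
  obtain ⟨v, rfl⟩ := hJ w
  exact ⟨(m, v, ν), rfl⟩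

theorem dCyc_of_split {w s t : List X} {x : X} {i : ℕ} (hw : w = s ++ x :: t)
    (hi : i = s.length + 1) (m : M) (ν : N) :
    dCyc star dot actN i (m, w, ν) = (m, s.map (star x) ++ t.map (dot x), actN x ν) := by
  simp [dCyc, hw, hi]

theorem chiL_append_cons (s t : List X) (x : X) :
    chiL tri Jinv (s.length + 1) (s ++ x :: t) =
      (Jinv (s.reverse.foldl tri x :: (s ++ t))).head? := by
  simp [chiL]

theorem dPrime_of_split {w s t : List X} {x c : X} {i : ℕ} (hw : w = s ++ x :: t)
    (hi : i = s.length + 1) (hc : (Jinv (s.reverse.foldl tri x :: (s ++ t))).head? = some c)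
    (m : M) (ν : N) :
    dPrime tri Jinv actM i (m, w, ν) = (actM m c, s ++ t, ν) := by
  have herase : (s ++ x :: t).eraseIdx s.length = s ++ t := by
    simp [List.eraseIdx_append_of_length_le]
  simp only [dPrime, hw, hi, chiL_append_cons, hc, Nat.add_sub_cancel, herase]

theorem guitarHat_intertwines_dRMSelf (hσ : IsBraided σ)
    (hstar : ∀ a b, star b (braidR σ a b) = a)
    (hdot : ∀ a b, dot (braidR σ a b) b = braidL σ a b) :
    IntertwinesFaces wordLength (guitarHat σ : M × List X × N → M × List X × N)
      (dRMSelf σ actN) (dCyc star dot actN) := by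
  rintro i ⟨m, w, ν⟩ hi hiw
  obtain ⟨s, x, t, rfl, rfl⟩ := exists_split w hi hiw
  have hmap_star : ((guitar σ s).map (crossRight σ · (x :: t))).map (star (crossRight σ x t)) =
      (guitar σ s).map (crossRight σ · (crossRightWord σ x t)) := by
    simp only [List.map_map, Function.comp_def, hσ.star_crossRight hstar]
  rw [dRMSelf_of_split rfl rfl]
  simp only [guitarHat]
  rw [dCyc_of_split (guitar_append_cons s t x) (by simp [length_guitar]), hmap_star,
    ← hσ.guitar_crossRightWord hdot, ← guitar_append]

theorem guitarHat_intertwines_dLP (hσ : IsBraided σ)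
    (htri : ∀ a b, tri b (braidR σ a b) = braidR σ (braidL σ a b) (braidR σ a b))
    (hJ : Function.LeftInverse Jinv (guitar σ)) :
    IntertwinesFaces wordLength (guitarHat σ : M × List X × N → M × List X × N)
      (dLP σ actM) (dPrime tri Jinv actM) := by
  rintro i ⟨m, w, ν⟩ hi hiw
  obtain ⟨s, x, t, rfl, rfl⟩ := exists_split w hi hiw
  have hchi : (Jinv (((guitar σ s).map (crossRight σ · (x :: t))).reverse.foldl tri
      (crossRight σ x t) :: ((guitar σ s).map (crossRight σ · (x :: t)) ++ guitar σ t))).head? =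
      some (crossLeft σ s x) := by
    rw [← hσ.crossRight_crossLeft htri, ← hσ.guitar_crossLeftWord_append, ← guitar_cons, hJ,
      List.head?_cons]
  rw [dLP_of_split rfl rfl]
  simp only [guitarHat]
  rw [dPrime_of_split (guitar_append_cons s t x) (by simp [length_guitar]) hchi,
    ← hσ.guitar_crossLeftWord_append]

end GuitarIntertwines

/-- For a left non-degenerate braided set `(X, σ)`, a right
module `M` and a left module `N`, the families `(d'_i, d_i)` on `M × X^k × N`
form a pre-cubical structure in Set, and the extended guitar map
`Ĵ = id × J × id` intertwines `(d_i^{l,+}, d_i^{r,-})` with `(d'_i, d_i)`. -/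
theorem statement_10 {X M N : Type*} (σ : X × X → X × X)
    (hYB : s12 σ ∘ s23 σ ∘ s12 σ = s23 σ ∘ s12 σ ∘ s23 σ)
    (star : X → X → X)
    (hstar1 : ∀ a b : X, (σ (star b a, b)).2 = a)
    (hstar2 : ∀ a b : X, star b ((σ (a, b)).2) = a)
    (dot : X → X → X)
    (hdot : ∀ a b : X, dot a b = (σ (star b a, b)).1)
    (tri : X → X → X)
    (htri : ∀ a b : X, tri a b = (σ (dot b a, b)).2)
    (actM : M → X → M)
    (hM : ∀ (m : M) (a b : X),
      actM (actM m a) b = actM (actM m (σ (a, b)).1) (σ (a, b)).2)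
    (actN : X → N → N)
    (hN : ∀ (a b : X) (n : N),
      actN a (actN b n) = actN (σ (a, b)).1 (actN (σ (a, b)).2 n))
    (Jinv : List X → List X)
    (hJ1 : ∀ l : List X, guitar σ (Jinv l) = l)
    (hJ2 : ∀ l : List X, Jinv (guitar σ l) = l) :
    (∀ (k i j : ℕ) (p : M × List X × N), p.2.1.length = k →
      1 ≤ i → i < j → j ≤ k →
      dPrime tri Jinv actM i (dPrime tri Jinv actM j p)
        = dPrime tri Jinv actM (j - 1) (dPrime tri Jinv actM i p) ∧
      dPrime tri Jinv actM i (dCyc star dot actN j p)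
        = dCyc star dot actN (j - 1) (dPrime tri Jinv actM i p) ∧
      dCyc star dot actN i (dPrime tri Jinv actM j p)
        = dPrime tri Jinv actM (j - 1) (dCyc star dot actN i p) ∧
      dCyc star dot actN i (dCyc star dot actN j p)
        = dCyc star dot actN (j - 1) (dCyc star dot actN i p)) ∧
    (∀ (k i : ℕ) (p : M × List X × N), p.2.1.length = k → 1 ≤ i → i ≤ k →
      ((dRM σ actN k i p).1, guitar σ (dRM σ actN k i p).2.1,
          (dRM σ actN k i p).2.2)
        = dCyc star dot actN i (p.1, guitar σ p.2.1, p.2.2) ∧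
      ((dLP σ actM i p).1, guitar σ (dLP σ actM i p).2.1,
          (dLP σ actM i p).2.2)
        = dPrime tri Jinv actM i (p.1, guitar σ p.2.1, p.2.2)) := by
  have hdot' := dot_braidR (σ := σ) hstar2 hdot
  have hJd : IntertwinesFaces wordLength (guitarHat σ) (dRMSelf σ actN) (dCyc star dot actN) :=
    guitarHat_intertwines_dRMSelf (M := M) hYB hstar2 hdot'
  have hJd' : IntertwinesFaces wordLength (guitarHat σ) (dLP σ actM) (dPrime tri Jinv actM) :=
    guitarHat_intertwines_dLP (N := N) hYB (tri_braidR hdot' htri) hJ2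
  have hJ : Function.Surjective (guitarHat (M := M) (N := N) σ) :=
    surjective_guitarHat (Function.RightInverse.surjective hJ1)
  have hd := lowersDegree_dRMSelf (M := M) (σ := σ) (actN := actN)
  have hd' := lowersDegree_dLP (N := N) (σ := σ) (actM := actM)
  refine ⟨?_, ?_⟩
  · rintro k i j p rfl hi hij hj
    exact ⟨(facesCommute_dLP_dLP hYB hM).transport hJ wordLength_guitarHat hd' hd' hJd' hJd'
        hi hij hj,
      facesCommute_dLP_dRMSelf.transport hJ wordLength_guitarHat hd' hd hJd' hJd hi hij hj,
      (facesCommute_dRMSelf_dLP hYB).transport hJ wordLength_guitarHat hd hd' hJd hJd' hi hij hj,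
      (facesCommute_dRMSelf_dRMSelf hYB hN).transport hJ wordLength_guitarHat hd hd hJd hJd
        hi hij hj⟩
  · rintro k i p rfl hi hik
    exact ⟨hJd hi hik, hJd' hi hik⟩
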